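/- NGr is a category: with objects the nested graphs, morphisms the pairs (μ, κ) of a merger μ followed by a contraction κ (up to shifting an isomorphism between the two factors), composition defined by (κ₂, μ₂) ∘ (κ₁, μ₁) = (κ₂ ∘ κ', μ' ∘ μ₁) where κ' ∘ μ' is the canonical merger–contraction decomposition of μ₂ ∘ κ₁, and identities the pairs of identity functors, this composition is associative and unital. -/

import Mathlib

open CategoryTheory

universe v u

/-- A morphism in a category is an identity morphism (up to `eqToHom`). -/
def IsId {C : Type u} [Category.{v} C] {A B : C} (f : A ⟶ B) : Prop :=
  ∃ h : A = B, f = eqToHom h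

/-- A flag in a nested graph is a non-identity morphism. -/
def IsFlag {C : Type u} [Category.{v} C] {A B : C} (f : A ⟶ B) : Prop :=
  ¬ IsId f

/-- An irreducible flag is a flag that cannot be written as the composite of two flags. -/
def IsIrred {C : Type u} [Category.{v} C] {A B : C} (f : A ⟶ B) : Prop :=
  IsFlag f ∧ ¬ ∃ (X : C) (g : A ⟶ X) (h : X ⟶ B), IsFlag g ∧ IsFlag h ∧ g ≫ h = f

/-- A grading: a functor to the finite ordinal `Fin n` (viewed as a preorder category)
sending every non-identity morphism to a non-identity morphism. -/
def IsGrading {C : Type u} [Category.{v} C] {n : ℕ} (G : C ⥤ Fin n) : Prop :=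
  ∀ ⦃A B : C⦄ (f : A ⟶ B), IsFlag f → IsFlag (G.map f)

/-- A nested graph: a category admitting a grading into some finite ordinal. -/
def IsNestedGraph (C : Type u) [Category.{v} C] : Prop :=
  ∃ (n : ℕ) (G : C ⥤ Fin n), IsGrading G

/-- A functor `φ` contracts a flag `f` if `φ.map f` is an identity. -/
def Contracts {C D : Type u} [Category.{v} C] [Category.{v} D]
    (φ : C ⥤ D) {A B : C} (f : A ⟶ B) : Prop :=
  IsId (φ.map f)

/-- An admissible functor: it maps irreducible flags to identities or irreducible flags,
and whenever it contracts an irreducible flag with domain `A`, it contracts every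
irreducible flag with domain `A`. -/
def IsAdmissible {C D : Type u} [Category.{v} C] [Category.{v} D] (φ : C ⥤ D) : Prop :=
  (∀ ⦃A B : C⦄ (f : A ⟶ B), IsIrred f → IsId (φ.map f) ∨ IsIrred (φ.map f)) ∧
  (∀ ⦃A B B' : C⦄ (f : A ⟶ B) (g : A ⟶ B'), IsIrred f → IsIrred g →
      Contracts φ f → Contracts φ g)

/-- The morphisms of the codomain generated by the image of a functor. -/
inductive GenBy {C D : Type u} [Category.{v} C] [Category.{v} D] (φ : C ⥤ D) :
    ∀ {X Y : D}, (X ⟶ Y) → Prop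
  | id (X : D) : GenBy φ (𝟙 X)
  | map {A B : C} (f : A ⟶ B) : GenBy φ (φ.map f)
  | comp {X Y Z : D} (f : X ⟶ Y) (g : Y ⟶ Z) :
      GenBy φ f → GenBy φ g → GenBy φ (f ≫ g)

/-- An epi-functor: its image generates the codomain. -/
def IsEpiFunctor {C D : Type u} [Category.{v} C] [Category.{v} D] (φ : C ⥤ D) : Prop :=
  Function.Surjective φ.obj ∧ ∀ ⦃X Y : D⦄ (f : X ⟶ Y), GenBy φ f

/-- `μ : C ⥤ D` exhibits `D` as the quotient of `C` identifying `r`-related objects,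
with morphisms freely generated by the morphisms of `C` subject to the composition
relations of `C` (expressed via the universal property). -/
def IsQuotientBy {C D : Type u} [Category.{v} C] [Category.{v} D]
    (r : C → C → Prop) (μ : C ⥤ D) : Prop :=
  (∀ A B : C, μ.obj A = μ.obj B ↔ Relation.EqvGen r A B) ∧
  Function.Surjective μ.obj ∧
  (∀ ⦃X Y : D⦄ (f : X ⟶ Y), GenBy μ f) ∧
  (∀ (E : Type u) [Category.{v} E] (F : C ⥤ E),
      (∀ A B : C, r A B → F.obj A = F.obj B) → ∃! F' : D ⥤ E, μ ⋙ F' = F)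

/-- A merger: an admissible epi-functor exhibiting its codomain as the quotient of its
domain by an equivalence relation on objects, with morphisms freely generated subject to
the composition relations of the domain. -/
def IsMerger {C D : Type u} [Category.{v} C] [Category.{v} D] (μ : C ⥤ D) : Prop :=
  IsAdmissible μ ∧ IsEpiFunctor μ ∧
    ∃ r : C → C → Prop, Equivalence r ∧ IsQuotientBy r μ

/-- `A` is a vertex of its fiber under `φ`: it is not the domain of any flag
contracted by `φ`. -/
def IsVertexOver {C D : Type u} [Category.{v} C] [Category.{v} D]
    (φ : C ⥤ D) (A : C) : Prop :=
  ∀ ⦃B : C⦄ (f : A ⟶ B), Contracts φ f → IsId f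

/-- `A₁` is a vertex of the fiber of `φ` over `A₂`. -/
def IsFiberVertex {C D : Type u} [Category.{v} C] [Category.{v} D]
    (φ : C ⥤ D) (A₂ : D) (A₁ : C) : Prop :=
  φ.obj A₁ = A₂ ∧ IsVertexOver φ A₁

/-- A contraction: an admissible epi-functor each of whose fibers is a corolla,
i.e. has a unique vertex. -/
def IsContraction {C D : Type u} [Category.{v} C] [Category.{v} D] (κ : C ⥤ D) : Prop :=
  IsAdmissible κ ∧ IsEpiFunctor κ ∧ ∀ A₂ : D, ∃! A₁ : C, IsFiberVertex κ A₂ A₁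

/-- The canonical merger relation of `φ`: it relates distinct objects `A ≠ B` exactly when
`φ A = φ B` and both `A` and `B` are vertices of the fiber of `φ` over `φ A`. -/
def mergerRel {C D : Type u} [Category.{v} C] [Category.{v} D] (φ : C ⥤ D) :
    C → C → Prop :=
  fun A B => A ≠ B ∧ φ.obj A = φ.obj B ∧ IsVertexOver φ A ∧ IsVertexOver φ B

/-- A canonical merger–contraction decomposition of `φ`: the merger part is the quotient
of the domain identifying, within each fiber of `φ`, all objects that are vertices of that
fiber. -/
def IsCanonicalDecomp {C P D : Type u} [Category.{v} C] [Category.{v} P] [Category.{v} D]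
    (φ : C ⥤ D) (μ : C ⥤ P) (κ : P ⥤ D) : Prop :=
  IsQuotientBy (mergerRel φ) μ ∧ μ ⋙ κ = φ

/-- Two merger–contraction pairs are equal as morphisms of nested graphs: one is obtained
from the other by shifting an isomorphism from the merger to the contraction. -/
def PairEquiv {A B P P' : Type u} [Category.{v} A] [Category.{v} B]
    [Category.{v} P] [Category.{v} P']
    (μ : A ⥤ P) (κ : P ⥤ B) (μ' : A ⥤ P') (κ' : P' ⥤ B) : Prop :=
  ∃ (e : P ⥤ P') (e' : P' ⥤ P), e ⋙ e' = 𝟭 P ∧ e' ⋙ e = 𝟭 P' ∧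
    μ ⋙ e = μ' ∧ e ⋙ κ' = κ

/-- A category contains no cycle of flags. -/
def NoFlagCycles (C : Type u) [Category.{v} C] : Prop :=
  ∀ (k : ℕ), 0 < k → ∀ (obj : Fin (k + 1) → C)
    (flag : ∀ i : Fin k, obj i.castSucc ⟶ obj i.succ),
    (∀ i, IsFlag (flag i)) → obj 0 ≠ obj (Fin.last k)

/-!
A merger-contraction pair is determined, up to shifting an isomorphism, by its composite functor
and by the objects its merger identifies, because a merger is universal among functors making
these identifications. So it suffices to compare identifications.

For associativity write `ψ = κ₁ ⋙ μ₂` and `θ = κ₂ ⋙ μ₃`. Either triple composite identifies two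
distinct objects exactly when both are vertices over `ψ` and their images under `ψ` are equal or
are vertices of the same fiber of `θ`. For one bracketing this holds because mergers contract no
flags: lengths of morphisms factor through them. For the other one must see that if `α A` is a
vertex over `β ⋙ θ`, where `(α, β)` is the canonical decomposition of `ψ`, then `ψ A` is a vertex
over `θ`. Here admissibility enters: a flag leaving `ψ A` begins with the image of a morphism
whose domain is a vertex of the fiber of `ψ`, and `α` has identified that vertex with `A`.
-/

section Identities

variable {C D : Type u} [Category.{v} C] [Category.{v} D]

theorem isId_eqToHom {A B : C} (h : A = B) : IsId (eqToHom h) := ⟨h, rfl⟩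

theorem IsId.comp {X Y Z : C} {f : X ⟶ Y} {g : Y ⟶ Z} (hf : IsId f) (hg : IsId g) :
    IsId (f ≫ g) := by
  obtain ⟨rfl, rfl⟩ := hf
  obtain ⟨rfl, rfl⟩ := hg
  exact ⟨rfl, by simp⟩

theorem IsId.map (φ : C ⥤ D) {X Y : C} {f : X ⟶ Y} (hf : IsId f) : IsId (φ.map f) := by
  obtain ⟨rfl, rfl⟩ := hf
  exact ⟨rfl, by simp⟩

/-- Identities are indecomposable: a composite is an identity only if both factors are. A functor
into such a category contracts every factor of a flag it contracts. As with `IsId`, identities are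
taken up to `eqToHom`. -/
def HasIndecomposableIds (C : Type u) [Category.{v} C] : Prop :=
  ∀ ⦃X Y Z : C⦄ ⦃f : X ⟶ Y⦄ ⦃g : Y ⟶ Z⦄, IsId (f ≫ g) → IsId f ∧ IsId g

theorem Contracts.of_comp_middle (hD : HasIndecomposableIds D) {φ : C ⥤ D} {W X Y Z : C}
    {f : W ⟶ X} {g : X ⟶ Y} {h : Y ⟶ Z} (hc : Contracts φ (f ≫ g ≫ h)) : Contracts φ g := by
  rw [Contracts, φ.map_comp, φ.map_comp] at hc
  exact (hD (hD hc).2).1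

end Identities

section Length

variable {C : Type u} [Category.{v} C]

/-- A length-graded category: its morphisms have additive natural-number lengths, and exactly
the identities have length zero. Nested graphs are length-graded by differences of degrees, and
so are free categories, even those on infinite or cyclic graphs. -/
def IsLengthGraded (C : Type u) [Category.{v} C] : Prop :=
  ∃ ℓ : ∀ ⦃A B : C⦄, (A ⟶ B) → ℕ,
    (∀ ⦃A B B' : C⦄ (f : A ⟶ B) (g : B ⟶ B'), ℓ (f ≫ g) = ℓ f + ℓ g) ∧
    ∀ ⦃A B : C⦄ (f : A ⟶ B), IsId f ↔ ℓ f = 0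

theorem IsNestedGraph.isLengthGraded (hC : IsNestedGraph C) : IsLengthGraded C := by
  obtain ⟨n, G, hG⟩ := hC
  have hle {A B : C} (f : A ⟶ B) : (G.obj A).val ≤ (G.obj B).val := leOfHom (G.map f)
  refine ⟨fun A B _ => (G.obj B).val - (G.obj A).val, fun A B B' f g => ?_,
    fun A B f => ⟨?_, fun h => ?_⟩⟩
  · have := hle f
    have := hle g
    dsimp only
    omega
  · rintro ⟨rfl, -⟩
    exact Nat.sub_self _
  · by_contra hf
    exact hG f hf ⟨Fin.ext ((hle f).antisymm (Nat.sub_eq_zero_iff_le.1 h)), Subsingleton.elim _ _⟩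

theorem IsLengthGraded.hasIndecomposableIds (hC : IsLengthGraded C) : HasIndecomposableIds C := by
  obtain ⟨ℓ, hadd, hzero⟩ := hC
  intro X Y Z f g h
  simpa only [hzero, hadd, Nat.add_eq_zero_iff] using h

theorem IsLengthGraded.exists_irred_comp_eq (hC : IsLengthGraded C) {A B : C} (f : A ⟶ B)
    (hf : IsFlag f) : ∃ (X : C) (g : A ⟶ X) (h : X ⟶ B), IsIrred g ∧ g ≫ h = f := by
  obtain ⟨ℓ, hadd, hzero⟩ := hC
  induction hn : ℓ f using Nat.strong_induction_on generalizing B with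
  | _ n ih =>
    by_cases hirr : IsIrred f
    · exact ⟨B, f, 𝟙 B, hirr, Category.comp_id f⟩
    · obtain ⟨X, g, h, hg, hh, rfl⟩ := not_not.1 (not_and.1 hirr hf)
      have hlt : ℓ g < n := by
        have := mt (hzero h).2 hh
        have := hadd g h
        omega
      obtain ⟨Y, g₁, g₂, hg₁, rfl⟩ := ih (ℓ g) hlt g hg rfl
      exact ⟨Y, g₁, g₂ ≫ h, hg₁, (Category.assoc _ _ _).symm⟩

end Length

section Functors

variable {C D E : Type u} [Category.{v} C] [Category.{v} D] [Category.{v} E]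
  {φ : C ⥤ D} {ψ : D ⥤ E}

theorem IsVertexOver.of_comp {A : C} (h : IsVertexOver (φ ⋙ ψ) A) : IsVertexOver φ A :=
  fun _ f hf => h f (hf.map ψ)

theorem IsVertexOver.comp {A : C} (hφ : IsVertexOver φ A) (hψ : IsVertexOver ψ (φ.obj A)) :
    IsVertexOver (φ ⋙ ψ) A :=
  fun _ f hf => hφ f (hψ (φ.map f) hf)

theorem IsAdmissible.comp (hφ : IsAdmissible φ) (hψ : IsAdmissible ψ) :
    IsAdmissible (φ ⋙ ψ) := by
  refine ⟨fun A B f hf => ?_, fun A B B' f g hf hg hc => ?_⟩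
  · exact (hφ.1 f hf).elim (fun h => Or.inl (h.map ψ)) (hψ.1 (φ.map f))
  · rcases hφ.1 g hg with hg' | hg'
    · exact hg'.map ψ
    · rcases hφ.1 f hf with hf' | hf'
      · exact (hφ.2 f g hf hg hf').map ψ
      · exact hψ.2 _ _ hf' hg' hc

theorem GenBy.map_comp (ψ : D ⥤ E) {X Y : D} {f : X ⟶ Y} (hf : GenBy φ f) :
    GenBy (φ ⋙ ψ) (ψ.map f) := by
  induction hf with
  | id X => exact ψ.map_id X ▸ GenBy.id _
  | map f => exact GenBy.map (φ := φ ⋙ ψ) f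
  | comp f g _ _ hf hg => exact ψ.map_comp f g ▸ GenBy.comp _ _ hf hg

theorem IsEpiFunctor.comp (hφ : IsEpiFunctor φ) (hψ : IsEpiFunctor ψ) :
    IsEpiFunctor (φ ⋙ ψ) := by
  refine ⟨hψ.1.comp hφ.1, fun X Y f => ?_⟩
  induction hψ.2 f with
  | id X => exact GenBy.id _
  | map f => exact (hφ.2 f).map_comp ψ
  | comp f g _ _ hf hg => exact GenBy.comp _ _ hf hg

theorem GenBy.exists_flag_head {X Y : D} {f : X ⟶ Y} (hf : GenBy φ f) (hflag : IsFlag f) :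
    ∃ (A B : C) (g : A ⟶ B) (e : X = φ.obj A) (k : φ.obj B ⟶ Y),
      IsFlag (φ.map g) ∧ f = eqToHom e ≫ φ.map g ≫ k := by
  induction hf with
  | id X => exact absurd (isId_eqToHom rfl) hflag
  | map g => exact ⟨_, _, g, rfl, 𝟙 _, hflag, by simp⟩
  | comp f₁ f₂ _ _ ih₁ ih₂ =>
    by_cases hf₁ : IsId f₁
    · obtain ⟨A, B, g, e, k, hg, rfl⟩ := ih₂ fun hf₂ => hflag (hf₁.comp hf₂)
      obtain ⟨rfl, rfl⟩ := hf₁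
      exact ⟨A, B, g, e, k, hg, by simp⟩
    · obtain ⟨A, B, g, e, k, hg, rfl⟩ := ih₁ hf₁
      exact ⟨A, B, g, e, k ≫ f₂, hg, by simp⟩

/- If `A` is not a vertex, admissibility contracts the first irreducible factor of `f`, which can
therefore be dropped. -/
theorem IsAdmissible.exists_lift_from_vertex (hφ : IsAdmissible φ) (hC : IsLengthGraded C)
    (hD : HasIndecomposableIds D) {A B : C} (f : A ⟶ B) (hf : IsFlag (φ.map f)) :
    ∃ (A' : C) (f' : A' ⟶ B) (e : φ.obj A = φ.obj A'),
      IsVertexOver φ A' ∧ φ.map f = eqToHom e ≫ φ.map f' := by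
  have ⟨ℓ, hadd, hzero⟩ := hC
  induction hn : ℓ f using Nat.strong_induction_on generalizing A with
  | _ n ih =>
    by_cases hA : IsVertexOver φ A
    · exact ⟨A, f, rfl, hA, by simp⟩
    · simp only [IsVertexOver, not_forall] at hA
      obtain ⟨Z, g, hgc, hg⟩ := hA
      obtain ⟨Y, g₁, g₂, hg₁, rfl⟩ := hC.exists_irred_comp_eq g hg
      obtain ⟨X, f₁, f₂, hf₁, rfl⟩ := hC.exists_irred_comp_eq f fun h => hf (h.map φ)
      rw [Contracts, φ.map_comp] at hgc
      have hc : Contracts φ f₁ := hφ.2 g₁ f₁ hg₁ hf₁ (hD hgc).1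
      have hlt : ℓ f₂ < n := by
        have := mt (hzero f₁).2 hf₁.1
        have := hadd f₁ f₂
        omega
      rw [φ.map_comp] at hf
      obtain ⟨A', f', e', hA', hf'⟩ := ih (ℓ f₂) hlt f₂ (fun h => hf (hc.comp h)) rfl
      obtain ⟨e, he⟩ := hc
      exact ⟨A', f', e.trans e', hA', by simp [he, hf']⟩

theorem IsAdmissible.exists_vertex_head (hφ : IsAdmissible φ) (hφe : IsEpiFunctor φ)
    (hC : IsLengthGraded C) (hD : HasIndecomposableIds D) {X Y : D} (f : X ⟶ Y)
    (hf : IsFlag f) :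
    ∃ (A B : C) (g : A ⟶ B) (e : X = φ.obj A) (k : φ.obj B ⟶ Y),
      IsVertexOver φ A ∧ IsFlag (φ.map g) ∧ f = eqToHom e ≫ φ.map g ≫ k := by
  obtain ⟨A, B, g, e, k, hg, rfl⟩ := (hφe.2 f).exists_flag_head hf
  obtain ⟨A', g', e', hA', hg'⟩ := hφ.exists_lift_from_vertex hC hD g hg
  refine ⟨A', B, g', e.trans e', k, hA', fun h => hg ?_, by simp [hg']⟩
  exact hg' ▸ (isId_eqToHom e').comp h

end Functors

section UniversalQuotient

variable {C D D' E : Type u} [Category.{v} C] [Category.{v} D] [Category.{v} D'] [Category.{v} E]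
  {μ : C ⥤ D}

/-- A functor that is universal among the functors identifying the objects it identifies. This
is the freeness of a merger, with the relation on objects replaced by the kernel of `μ`. -/
def IsUniversalQuotient (μ : C ⥤ D) : Prop :=
  ∀ (E : Type u) [Category.{v} E] (F : C ⥤ E),
    (∀ A B : C, μ.obj A = μ.obj B → F.obj A = F.obj B) → ∃! F' : D ⥤ E, μ ⋙ F' = F

theorem IsQuotientBy.isUniversalQuotient {r : C → C → Prop} (h : IsQuotientBy r μ) :
    IsUniversalQuotient μ :=
  fun E _ F hF => h.2.2.2 E F fun A B hr => hF A B ((h.1 A B).2 (Relation.EqvGen.rel _ _ hr))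

theorem IsUniversalQuotient.id (C : Type u) [Category.{v} C] : IsUniversalQuotient (𝟭 C) :=
  fun _ _ F _ => ⟨F, rfl, fun _ h => h⟩

theorem IsUniversalQuotient.comp {ν : D ⥤ E} (hμ : IsUniversalQuotient μ)
    (hs : Function.Surjective μ.obj) (hν : IsUniversalQuotient ν) :
    IsUniversalQuotient (μ ⋙ ν) := by
  intro E' _ F hF
  obtain ⟨F₁, rfl, huniq₁⟩ := hμ E' F fun A B h => hF A B (congrArg ν.obj h)
  obtain ⟨F₂, rfl, huniq₂⟩ := hν E' F₁ (hs.forall₂.2 hF)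
  exact ⟨F₂, rfl, fun F' h => huniq₂ F' (huniq₁ (ν ⋙ F') h)⟩

theorem IsUniversalQuotient.cancel (hμ : IsUniversalQuotient μ) {F G : D ⥤ E}
    (h : μ ⋙ F = μ ⋙ G) : F = G :=
  (hμ E (μ ⋙ G) fun _ _ e => congrArg G.obj e).unique h rfl

theorem IsUniversalQuotient.pairEquiv {κ : D ⥤ E} {μ' : C ⥤ D'} {κ' : D' ⥤ E}
    (hμ : IsUniversalQuotient μ) (hμ' : IsUniversalQuotient μ')
    (hobj : ∀ A B : C, μ.obj A = μ.obj B ↔ μ'.obj A = μ'.obj B) (hcomp : μ ⋙ κ = μ' ⋙ κ') :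
    PairEquiv μ κ μ' κ' := by
  obtain ⟨e, he, -⟩ := hμ D' μ' fun A B => (hobj A B).1
  obtain ⟨e', he', -⟩ := hμ' D μ fun A B => (hobj A B).2
  refine ⟨e, e', hμ.cancel ?_, hμ'.cancel ?_, he, hμ.cancel ?_⟩
  · rw [← Functor.assoc, he, he', Functor.comp_id]
  · rw [← Functor.assoc, he', he, Functor.comp_id]
  · rw [← Functor.assoc, he, hcomp]

/- Lengths define a functor to the one-object category of the monoid `ℕ`. As it identifies all
objects, it factors through `μ`, so a morphism contracted by `μ` has length zero. -/
theorem IsUniversalQuotient.isVertexOver (hμ : IsUniversalQuotient μ) (hC : IsLengthGraded C)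
    (A : C) : IsVertexOver μ A := by
  obtain ⟨ℓ, hadd, hzero⟩ := hC
  let L : C ⥤ SingleObj (Multiplicative ℕ) :=
    { obj := fun _ => SingleObj.star _
      map := fun f => Multiplicative.ofAdd (ℓ f)
      map_id := fun X => congrArg Multiplicative.ofAdd ((hzero (𝟙 X)).1 (isId_eqToHom rfl))
      map_comp := fun f g =>
        congrArg Multiplicative.ofAdd ((hadd f g).trans (Nat.add_comm _ _)) }
  let := uliftCategory.{0, 0, u} (SingleObj (Multiplicative ℕ))
  obtain ⟨F, hF, -⟩ := hμ (ULiftHom.{v} (ULift.{u} (SingleObj (Multiplicative ℕ))))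
    (L ⋙ ULift.upFunctor ⋙ ULiftHom.up) fun _ _ _ => rfl
  intro B f hf
  have hLf : IsId ((L ⋙ ULift.upFunctor ⋙ ULiftHom.up).map f) := hF ▸ hf.map F
  obtain ⟨_, hL⟩ := hLf
  exact (hzero f).2 (congrArg ULift.down hL)

end UniversalQuotient

section PairEquiv

variable {A B C P P' Z : Type u} [Category.{v} A] [Category.{v} B] [Category.{v} C]
  [Category.{v} P] [Category.{v} P'] [Category.{v} Z]
  {μ : A ⥤ P} {κ : P ⥤ B} {μ' : A ⥤ P'} {κ' : P' ⥤ B}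

theorem PairEquiv.precomp (h : PairEquiv μ κ μ' κ') (ρ : Z ⥤ A) :
    PairEquiv (ρ ⋙ μ) κ (ρ ⋙ μ') κ' := by
  obtain ⟨e, e', hee', he'e, rfl, hκ⟩ := h
  exact ⟨e, e', hee', he'e, rfl, hκ⟩

theorem PairEquiv.postcomp (h : PairEquiv μ κ μ' κ') (τ : B ⥤ C) :
    PairEquiv μ (κ ⋙ τ) μ' (κ' ⋙ τ) := by
  obtain ⟨e, e', hee', he'e, hμ, rfl⟩ := h
  exact ⟨e, e', hee', he'e, hμ, rfl⟩

end PairEquiv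

section CanonicalDecomp

theorem eqvGen_mergerRel_iff {C D : Type u} [Category.{v} C] [Category.{v} D] (φ : C ⥤ D)
    (A B : C) : Relation.EqvGen (mergerRel φ) A B ↔
      A = B ∨ (φ.obj A = φ.obj B ∧ IsVertexOver φ A ∧ IsVertexOver φ B) := by
  constructor
  · intro h
    induction h with
    | rel A B h => exact Or.inr h.2
    | refl A => exact Or.inl rfl
    | symm A B _ h => exact h.imp Eq.symm fun ⟨e, hA, hB⟩ => ⟨e.symm, hB, hA⟩
    | trans A B C _ _ hAB hBC =>
      rcases hAB with rfl | ⟨e, hA, hB⟩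
      · exact hBC
      · rcases hBC with rfl | ⟨e', -, hC⟩
        · exact Or.inr ⟨e, hA, hB⟩
        · exact Or.inr ⟨e.trans e', hA, hC⟩
  · rintro (rfl | h)
    · exact Relation.EqvGen.refl A
    · by_cases hAB : A = B
      · exact hAB ▸ Relation.EqvGen.refl A
      · exact Relation.EqvGen.rel _ _ ⟨hAB, h⟩

namespace IsCanonicalDecomp

variable {X Y Z P P₁ P₂ Q₁ Q₂ : Type u} [Category.{v} X] [Category.{v} Y] [Category.{v} Z]
  [Category.{v} P] [Category.{v} P₁] [Category.{v} P₂] [Category.{v} Q₁] [Category.{v} Q₂]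
  {ψ : X ⥤ Y} {θ : Y ⥤ Z} {α : X ⥤ P} {β : P ⥤ Y}

theorem obj_eq_iff (h : IsCanonicalDecomp ψ α β) (A B : X) :
    α.obj A = α.obj B ↔
      A = B ∨ (ψ.obj A = ψ.obj B ∧ IsVertexOver ψ A ∧ IsVertexOver ψ B) :=
  (h.1.1 A B).trans (eqvGen_mergerRel_iff ψ A B)

theorem isVertexOver_obj (h : IsCanonicalDecomp ψ α β) (hY : HasIndecomposableIds Y) {A : X}
    (hA : IsVertexOver ψ A) : IsVertexOver β (α.obj A) := by
  intro B f hf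
  by_contra hflag
  obtain ⟨A', B', g, e, k, hg, rfl⟩ := (h.1.2.2.1 f).exists_flag_head hflag
  have hA' : IsVertexOver ψ A' := by
    rcases (h.obj_eq_iff A A').1 e with rfl | ⟨-, -, hA'⟩
    exacts [hA, hA']
  have hgc : Contracts ψ g := h.2 ▸ hf.of_comp_middle hY
  exact hg ((hA' g hgc).map α)

theorem isVertexOver_obj_of_comp (h : IsCanonicalDecomp ψ α β) (hX : IsLengthGraded X)
    (hY : HasIndecomposableIds Y) (hZ : HasIndecomposableIds Z) (hψ : IsAdmissible ψ)
    (hψe : IsEpiFunctor ψ) {A : X} (hA : IsVertexOver ψ A)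
    (hαA : IsVertexOver (β ⋙ θ) (α.obj A)) : IsVertexOver θ (ψ.obj A) := by
  intro W g hg
  by_contra hflag
  obtain ⟨A', B, f, e, k, hA', hf, rfl⟩ := hψ.exists_vertex_head hψe hX hY g hflag
  have hαA' : α.obj A = α.obj A' := (h.obj_eq_iff A A').2 (Or.inr ⟨e, hA, hA'⟩)
  have hθf : Contracts θ (ψ.map f) := hg.of_comp_middle hZ
  obtain ⟨-, rfl⟩ := h
  rw [hαA'] at hαA
  exact hf ((hαA (α.map f) hθf).map β)

theorem isVertexOver_comp_iff (h : IsCanonicalDecomp ψ α β) (hX : IsLengthGraded X)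
    (hY : HasIndecomposableIds Y) (hZ : HasIndecomposableIds Z) (hψ : IsAdmissible ψ)
    (hψe : IsEpiFunctor ψ) (A : X) :
    IsVertexOver (β ⋙ θ) (α.obj A) ↔ IsVertexOver ψ A ∧ IsVertexOver θ (ψ.obj A) := by
  constructor
  · intro hαA
    have hA : IsVertexOver ψ A := h.2 ▸ (h.1.isUniversalQuotient.isVertexOver hX A).comp hαA.of_comp
    exact ⟨hA, h.isVertexOver_obj_of_comp hX hY hZ hψ hψe hA hαA⟩
  · rintro ⟨hA, hθ⟩
    have hβ := h.isVertexOver_obj hY hA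
    obtain ⟨-, rfl⟩ := h
    exact hβ.comp hθ

theorem comp_obj_eq_iff (hX : IsLengthGraded X) (hY : IsLengthGraded Y)
    (hZ : HasIndecomposableIds Z) (hψ : IsAdmissible ψ) (hψe : IsEpiFunctor ψ)
    {α₁ : X ⥤ P₁} {β₁ : P₁ ⥤ Y} (h₁ : IsCanonicalDecomp ψ α₁ β₁)
    {α₂ : P₁ ⥤ P₂} {β₂ : P₂ ⥤ Z} (h₂ : IsCanonicalDecomp (β₁ ⋙ θ) α₂ β₂)
    {γ₁ : Y ⥤ Q₁} {δ₁ : Q₁ ⥤ Z} (k₁ : IsCanonicalDecomp θ γ₁ δ₁)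
    {γ₂ : X ⥤ Q₂} {δ₂ : Q₂ ⥤ Q₁} (k₂ : IsCanonicalDecomp (ψ ⋙ γ₁) γ₂ δ₂) (A B : X) :
    (α₁ ⋙ α₂).obj A = (α₁ ⋙ α₂).obj B ↔ γ₂.obj A = γ₂.obj B := by
  have hψγ (A : X) : IsVertexOver (ψ ⋙ γ₁) A ↔ IsVertexOver ψ A :=
    ⟨IsVertexOver.of_comp, fun hA => hA.comp (k₁.1.isUniversalQuotient.isVertexOver hY _)⟩
  have hβθ := h₁.isVertexOver_comp_iff (θ := θ) hX hY.hasIndecomposableIds hZ hψ hψe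
  have hobj (A : X) : (β₁ ⋙ θ).obj (α₁.obj A) = θ.obj (ψ.obj A) :=
    congrArg (fun F : X ⥤ Y => θ.obj (F.obj A)) h₁.2
  simp only [Functor.comp_obj α₁, Functor.comp_obj ψ, h₂.obj_eq_iff, h₁.obj_eq_iff,
    k₂.obj_eq_iff, k₁.obj_eq_iff, hψγ, hβθ, hobj]
  tauto

theorem pairEquiv_assoc (hX : IsLengthGraded X) (hY : IsLengthGraded Y)
    (hZ : HasIndecomposableIds Z) (hψ : IsAdmissible ψ) (hψe : IsEpiFunctor ψ)
    {α₁ : X ⥤ P₁} {β₁ : P₁ ⥤ Y} (h₁ : IsCanonicalDecomp ψ α₁ β₁)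
    {α₂ : P₁ ⥤ P₂} {β₂ : P₂ ⥤ Z} (h₂ : IsCanonicalDecomp (β₁ ⋙ θ) α₂ β₂)
    {γ₁ : Y ⥤ Q₁} {δ₁ : Q₁ ⥤ Z} (k₁ : IsCanonicalDecomp θ γ₁ δ₁)
    {γ₂ : X ⥤ Q₂} {δ₂ : Q₂ ⥤ Q₁} (k₂ : IsCanonicalDecomp (ψ ⋙ γ₁) γ₂ δ₂) :
    PairEquiv (α₁ ⋙ α₂) β₂ γ₂ (δ₂ ⋙ δ₁) := by
  have hα : IsUniversalQuotient (α₁ ⋙ α₂) :=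
    h₁.1.isUniversalQuotient.comp h₁.1.2.1 h₂.1.isUniversalQuotient
  refine hα.pairEquiv k₂.1.isUniversalQuotient
    (comp_obj_eq_iff hX hY hZ hψ hψe h₁ h₂ k₁ k₂) ?_
  calc (α₁ ⋙ α₂) ⋙ β₂
      = (α₁ ⋙ β₁) ⋙ θ := congrArg (α₁ ⋙ ·) h₂.2
    _ = ψ ⋙ γ₁ ⋙ δ₁ := by rw [h₁.2, k₁.2]
    _ = γ₂ ⋙ δ₂ ⋙ δ₁ := congrArg (· ⋙ δ₁) k₂.2.symm

theorem pairEquiv_id_left (h : IsCanonicalDecomp ψ α β)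
    (hψ : ∀ (B : Y) (A A' : X), IsFiberVertex ψ B A → IsFiberVertex ψ B A' → A = A') :
    PairEquiv α β (𝟭 X) ψ :=
  h.1.isUniversalQuotient.pairEquiv (.id X)
    (fun A A' => (h.obj_eq_iff A A').trans
      (or_iff_left_of_imp fun ⟨e, hA, hA'⟩ => hψ _ A A' ⟨e, hA⟩ ⟨rfl, hA'⟩)) h.2

theorem pairEquiv_id_right (h : IsCanonicalDecomp ψ α β) (hX : IsLengthGraded X)
    (hψ : IsUniversalQuotient ψ) : PairEquiv α β ψ (𝟭 Y) :=
  h.1.isUniversalQuotient.pairEquiv hψ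
    (fun A A' => (h.obj_eq_iff A A').trans
      ⟨fun hAA' => hAA'.elim (congrArg ψ.obj) And.left,
        fun e => Or.inr ⟨e, hψ.isVertexOver hX A, hψ.isVertexOver hX A'⟩⟩) h.2

end IsCanonicalDecomp

end CanonicalDecomp

theorem NGr_is_category_general :
    (∀ {A D X₁ X₂ X₃ P₁ P₂ Q₁ Q₂ : Type u}
      [Category.{v} A] [Category.{v} D] [Category.{v} X₁] [Category.{v} X₂] [Category.{v} X₃]
      [Category.{v} P₁] [Category.{v} P₂] [Category.{v} Q₁] [Category.{v} Q₂],
      IsLengthGraded X₁ → IsLengthGraded X₂ → HasIndecomposableIds X₃ →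
      ∀ (ρ : A ⥤ X₁) {ψ : X₁ ⥤ X₂} {θ : X₂ ⥤ X₃} (τ : X₃ ⥤ D),
      IsAdmissible ψ → IsEpiFunctor ψ →
      ∀ {α₁ : X₁ ⥤ P₁} {β₁ : P₁ ⥤ X₂}, IsCanonicalDecomp ψ α₁ β₁ →
      ∀ {α₂ : P₁ ⥤ P₂} {β₂ : P₂ ⥤ X₃}, IsCanonicalDecomp (β₁ ⋙ θ) α₂ β₂ →
      ∀ {γ₁ : X₂ ⥤ Q₁} {δ₁ : Q₁ ⥤ X₃}, IsCanonicalDecomp θ γ₁ δ₁ →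
      ∀ {γ₂ : X₁ ⥤ Q₂} {δ₂ : Q₂ ⥤ Q₁}, IsCanonicalDecomp (ψ ⋙ γ₁) γ₂ δ₂ →
      PairEquiv (ρ ⋙ α₁ ⋙ α₂) (β₂ ⋙ τ) (ρ ⋙ γ₂) (δ₂ ⋙ δ₁ ⋙ τ)) ∧
    (∀ {A B X P : Type u}
      [Category.{v} A] [Category.{v} B] [Category.{v} X] [Category.{v} P]
      (ρ : A ⥤ X) {κ : X ⥤ B},
      (∀ (Y : B) (Z Z' : X), IsFiberVertex κ Y Z → IsFiberVertex κ Y Z' → Z = Z') →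
      ∀ {α : X ⥤ P} {β : P ⥤ B}, IsCanonicalDecomp κ α β →
      PairEquiv (ρ ⋙ α) β ρ κ) ∧
    (∀ {A B X Q : Type u}
      [Category.{v} A] [Category.{v} B] [Category.{v} X] [Category.{v} Q],
      IsLengthGraded A →
      ∀ {μ : A ⥤ X} (τ : X ⥤ B), IsUniversalQuotient μ →
      ∀ {α : A ⥤ Q} {β : Q ⥤ X}, IsCanonicalDecomp μ α β →
      PairEquiv α (β ⋙ τ) μ τ) :=
  ⟨fun hX₁ hX₂ hX₃ ρ _ _ τ hψ hψe _ _ h₁ _ _ h₂ _ _ k₁ _ _ k₂ =>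
      ((IsCanonicalDecomp.pairEquiv_assoc hX₁ hX₂ hX₃ hψ hψe h₁ h₂ k₁ k₂).precomp ρ).postcomp τ,
    fun ρ _ hκ _ _ h => (h.pairEquiv_id_left hκ).precomp ρ,
    fun hA _ τ hμ _ _ h => (h.pairEquiv_id_right hA hμ).postcomp τ⟩

/-- `NGr` is a category.  Objects are nested graphs, morphisms are pairs
`(μ, κ)` of a merger followed by a contraction (up to shifting an isomorphism between the
two factors), composition is defined via the canonical merger–contraction decomposition
of the middle composite, and identities are the pairs of identity functors.  The theorem
asserts that this composition is associative and unital (on representing pairs, up to the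
defining equivalence of pairs). -/
theorem NGr_is_category :
    -- associativity: given composable morphisms (μ₁,κ₁), (μ₂,κ₂), (μ₃,κ₃) and the
    -- canonical decompositions needed to form both iterated composites, the two
    -- resulting merger–contraction pairs coincide up to shifting an isomorphism.
    (∀ (A B C D X₁ X₂ X₃ P₁ P₂ Q₁ Q₂ : Type u)
      [Category.{v} A] [Category.{v} B] [Category.{v} C] [Category.{v} D]
      [Category.{v} X₁] [Category.{v} X₂] [Category.{v} X₃]
      [Category.{v} P₁] [Category.{v} P₂] [Category.{v} Q₁] [Category.{v} Q₂],
      IsNestedGraph A → IsNestedGraph B → IsNestedGraph C → IsNestedGraph D →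
      IsNestedGraph X₁ → IsNestedGraph X₂ → IsNestedGraph X₃ →
      IsNestedGraph P₁ → IsNestedGraph P₂ → IsNestedGraph Q₁ → IsNestedGraph Q₂ →
      ∀ (μ₁ : A ⥤ X₁) (κ₁ : X₁ ⥤ B) (μ₂ : B ⥤ X₂) (κ₂ : X₂ ⥤ C)
        (μ₃ : C ⥤ X₃) (κ₃ : X₃ ⥤ D),
      IsMerger μ₁ → IsContraction κ₁ → IsMerger μ₂ → IsContraction κ₂ →
      IsMerger μ₃ → IsContraction κ₃ →
      ∀ (α₁ : X₁ ⥤ P₁) (β₁ : P₁ ⥤ X₂), IsCanonicalDecomp (κ₁ ⋙ μ₂) α₁ β₁ →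
      ∀ (α₂ : P₁ ⥤ P₂) (β₂ : P₂ ⥤ X₃), IsCanonicalDecomp (β₁ ⋙ κ₂ ⋙ μ₃) α₂ β₂ →
      ∀ (γ₁ : X₂ ⥤ Q₁) (δ₁ : Q₁ ⥤ X₃), IsCanonicalDecomp (κ₂ ⋙ μ₃) γ₁ δ₁ →
      ∀ (γ₂ : X₁ ⥤ Q₂) (δ₂ : Q₂ ⥤ Q₁), IsCanonicalDecomp (κ₁ ⋙ μ₂ ⋙ γ₁) γ₂ δ₂ →
      PairEquiv (μ₁ ⋙ α₁ ⋙ α₂) (β₂ ⋙ κ₃) (μ₁ ⋙ γ₂) (δ₂ ⋙ δ₁ ⋙ κ₃)) ∧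
    -- left unitality: composing (μ,κ) : A → B with the identity pair of B gives (μ,κ).
    (∀ (A B X P : Type u)
      [Category.{v} A] [Category.{v} B] [Category.{v} X] [Category.{v} P],
      IsNestedGraph A → IsNestedGraph B → IsNestedGraph X → IsNestedGraph P →
      ∀ (μ : A ⥤ X) (κ : X ⥤ B), IsMerger μ → IsContraction κ →
      ∀ (α : X ⥤ P) (β : P ⥤ B), IsCanonicalDecomp κ α β →
      PairEquiv (μ ⋙ α) β μ κ) ∧
    -- right unitality: composing the identity pair of A with (μ,κ) : A → B gives (μ,κ).
    (∀ (A B X Q : Type u)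
      [Category.{v} A] [Category.{v} B] [Category.{v} X] [Category.{v} Q],
      IsNestedGraph A → IsNestedGraph B → IsNestedGraph X → IsNestedGraph Q →
      ∀ (μ : A ⥤ X) (κ : X ⥤ B), IsMerger μ → IsContraction κ →
      ∀ (α : A ⥤ Q) (β : Q ⥤ X), IsCanonicalDecomp μ α β →
      PairEquiv α (β ⋙ κ) μ κ) := by
  obtain ⟨assoc, id_left, id_right⟩ := NGr_is_category_general.{v, u}
  refine ⟨?_, ?_, ?_⟩
  · intro A B C D X₁ X₂ X₃ P₁ P₂ Q₁ Q₂ _ _ _ _ _ _ _ _ _ _ _ _ _ _ _ hX₁ hX₂ hX₃ _ _ _ _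
      μ₁ κ₁ μ₂ κ₂ μ₃ κ₃ _ hκ₁ hμ₂ _ _ _ α₁ β₁ h₁ α₂ β₂ h₂ γ₁ δ₁ k₁ γ₂ δ₂ k₂
    exact assoc hX₁.isLengthGraded hX₂.isLengthGraded hX₃.isLengthGraded.hasIndecomposableIds
      μ₁ κ₃ (hκ₁.1.comp hμ₂.1) (hκ₁.2.1.comp hμ₂.2.1) h₁ h₂ k₁ k₂
  · intro A B X P _ _ _ _ _ _ _ _ μ κ _ hκ α β h
    exact id_left μ (fun Y _ _ => (hκ.2.2 Y).unique) h
  · intro A B X Q _ _ _ _ hA _ _ _ μ κ ⟨_, _, _, _, hμ⟩ _ α β h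
    exact id_right hA.isLengthGraded κ hμ.isUniversalQuotient h
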